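/- arXiv:2112.15350 — 2 statements merged into one kernel-verified Lean document; each statement's English description precedes it below -/
import Mathlib

section
/- Let Y be a Banach space, A a nonempty bounded, closed, convex subset of Y, and (ζ, ρ) a complete metric space. Let C : A → ζ be a compact mapping, and let T : A × closure(C(A)) → A be a continuous mapping that is also a Kannan type equicontraction mapping. Then the equation T(u, C(u)) = u has a solution u ∈ A. -/
open Set MeasureTheory Metric

lemma interp_det {E : Type*} [NormedAddCommGroup E] [NormedSpace ℝ E] [FiniteDimensional ℝ E]
    (v : Fin (Module.finrank ℝ E + 1) → ℝ) (hv : Function.Injective v) :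
    ∃ c : Fin (Module.finrank ℝ E + 1) → ℝ, ∀ M : E →L[ℝ] E,
      (ContinuousLinearMap.id ℝ E + M).det =
        ∑ j, (ContinuousLinearMap.id ℝ E + v j • M).det * c j := by
  classical
  refine ⟨fun j => (Lagrange.basis Finset.univ v j).eval 1, fun M => ?_⟩
  let b := Module.finBasis ℝ E
  let A := LinearMap.toMatrix b b (M : E →ₗ[ℝ] E)
  let p : Polynomial ℝ := Matrix.det ((Polynomial.X : Polynomial ℝ) • A.map Polynomial.C
    + (1 : Matrix _ _ ℝ).map Polynomial.C)
  have hp : ∀ t : ℝ, (ContinuousLinearMap.id ℝ E + t • M).det = p.eval t := by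
    intro t
    have h1 : (ContinuousLinearMap.id ℝ E + t • M).det =
        LinearMap.det (LinearMap.id + t • (M : E →ₗ[ℝ] E)) := rfl
    rw [h1, ← LinearMap.det_toMatrix b, map_add, map_smul, LinearMap.toMatrix_id]
    simp only [p]
    rw [← Polynomial.coe_evalRingHom, RingHom.map_det]
    congr 1
    ext i j
    simp [A, add_comm, Matrix.one_apply, apply_ite]
    ring
  have hdeg : p.degree < (Finset.univ : Finset (Fin (Module.finrank ℝ E + 1))).card := by
    refine lt_of_le_of_lt Polynomial.degree_le_natDegree ?_
    have := Polynomial.natDegree_det_X_add_C_le A 1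
    simp only [Fintype.card_fin, Finset.card_univ] at this ⊢
    exact_mod_cast Nat.lt_succ_of_le this
  have h := Lagrange.eq_interpolate (s := Finset.univ) (v := v) hv.injOn hdeg
  have h1 := hp 1
  rw [one_smul] at h1
  rw [h1]
  conv_lhs => rw [h]
  simp [Lagrange.interpolate_apply, Polynomial.eval_finsetSum, hp]

lemma ext_zero_lip {E : Type*} [NormedAddCommGroup E] [NormedSpace ℝ E] 
    (h : E → E) (r L : ℝ) (hL : 0 ≤ L)
    (hlip : ∀ x ∈ closedBall (0:E) r, ∀ y ∈ closedBall (0:E) r, ‖h x - h y‖ ≤ L * ‖x - y‖)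
    (h0 : ∀ x, ‖x‖ = r → h x = 0) :
    ∃ k : E → E, (∀ x ∈ closedBall (0:E) r, k x = h x) ∧ (∀ x, r ≤ ‖x‖ → k x = 0) ∧
      ∀ x y, ‖k x - k y‖ ≤ L * ‖x - y‖ := by
  classical
  let k : E → E := fun x => if ‖x‖ ≤ r then h x else 0
  have hk1 : ∀ x, ‖x‖ ≤ r → k x = h x := fun x hx => if_pos hx
  have hk2 : ∀ x, r ≤ ‖x‖ → k x = 0 := by
    intro x hx
    rcases hx.eq_or_lt with e | e
    · rw [hk1 x e.symm.le, h0 x e.symm]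
    · exact if_neg e.not_ge
  have key : ∀ x y, ‖x‖ ≤ r → r ≤ ‖y‖ → ‖k x - k y‖ ≤ L * ‖x - y‖ := by
    intro x y hx hy
    have hc : ContinuousOn (fun s : ℝ => ‖x + s • (y - x)‖) (Icc 0 1) := by fun_prop
    obtain ⟨s, hs, hs'⟩ := intermediate_value_Icc (zero_le_one' ℝ) hc
      (show r ∈ Icc _ _ by simpa using ⟨hx, hy⟩)
    simp only at hs'
    set z := x + s • (y - x) with hz
    have hxz := hlip x (by simpa using hx) z (by simpa using hs'.le)
    rw [h0 z hs'] at hxz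
    rw [hk2 y hy, hk1 x hx]
    refine hxz.trans (mul_le_mul_of_nonneg_left ?_ hL)
    have : x - z = s • (x - y) := by rw [hz]; module
    rw [this, norm_smul, Real.norm_eq_abs, abs_of_nonneg hs.1]
    exact mul_le_of_le_one_left (norm_nonneg _) hs.2
  refine ⟨k, fun x hx => hk1 x (by simpa using hx), hk2, fun x y => ?_⟩
  rcases le_total ‖x‖ r with hx | hx <;> rcases le_total ‖y‖ r with hy | hy
  · rw [hk1 x hx, hk1 y hy]; exact hlip x (by simpa using hx) y (by simpa using hy)
  · exact key x y hx hy
  · rw [norm_sub_rev, norm_sub_rev x]; exact key y x hy hx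
  · rw [hk2 x hx, hk2 y hy]; simp; positivity

lemma perturb_bij {E : Type*} [NormedAddCommGroup E] [NormedSpace ℝ E] [CompleteSpace E]
    (k : E → E) (r L t : ℝ) (ht : 0 ≤ t) (htL : t * L ≤ 1/2)
    (hk2 : ∀ x, r ≤ ‖x‖ → k x = 0)
    (hlip : ∀ x y, ‖k x - k y‖ ≤ L * ‖x - y‖) :
    Function.Injective (fun x => x + t • k x) ∧
      (fun x => x + t • k x) '' ball 0 r = ball 0 r := by
  have hlt : ∀ x y, ‖t • k x - t • k y‖ ≤ 1/2 * ‖x - y‖ := by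
    intro x y
    rw [← smul_sub, norm_smul, Real.norm_eq_abs, abs_of_nonneg ht]
    calc t * ‖k x - k y‖ ≤ t * (L * ‖x - y‖) := mul_le_mul_of_nonneg_left (hlip x y) ht
      _ = t * L * ‖x - y‖ := by ring
      _ ≤ _ := mul_le_mul_of_nonneg_right htL (norm_nonneg _)
  have hinj : Function.Injective (fun x => x + t • k x) := by
    intro x y hxy
    simp only at hxy
    have h1 : x - y = t • k y - t • k x := by
      rw [sub_eq_sub_iff_add_eq_add, hxy, add_comm]
    have h2 := hlt y x
    rw [← h1, norm_sub_rev y x] at h2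
    have : ‖x - y‖ = 0 := le_antisymm (by linarith) (norm_nonneg _)
    exact sub_eq_zero.1 (norm_eq_zero.1 this)
  refine ⟨hinj, Subset.antisymm ?_ ?_⟩
  · rintro _ ⟨x, hx, rfl⟩
    by_contra hn
    simp only [mem_ball, dist_zero_right, not_lt] at hn hx
    have := hk2 _ hn
    have h3 : (fun x => x + t • k x) (x + t • k x) = (fun x => x + t • k x) x := by
      simp only [this]; simp
    have := hinj h3
    rw [this] at hn
    linarith
  · intro y hy
    have hc : ContractingWith (1/2) (fun x => y - t • k x) := by
      refine ⟨by rw [← NNReal.coe_lt_coe]; norm_num, LipschitzWith.of_dist_le_mul fun a b => ?_⟩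
      rw [dist_eq_norm, dist_eq_norm]
      have := hlt b a
      rw [norm_sub_rev b a] at this
      simpa using this
    have hf := hc.fixedPoint_isFixedPt
    set x := ContractingWith.fixedPoint _ hc
    have hx : y - t • k x = x := hf
    have hx' : x + t • k x = y := (sub_eq_iff_eq_add.1 hx).symm
    refine ⟨x, ?_, hx'⟩
    by_contra hn
    simp only [mem_ball, dist_zero_right, not_lt] at hn hy
    rw [hk2 x hn, smul_zero, add_zero] at hx'
    rw [hx'] at hn; linarith

lemma no_retraction {E : Type*} [NormedAddCommGroup E] [InnerProductSpace ℝ E]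
    [FiniteDimensional ℝ E] (G : E → E) (hG : ContDiff ℝ 1 G)
    (hn : ∀ x, ‖G x‖ = 3) (hid : ∀ x, ‖x‖ = 3 → G x = x) : False := by
  let _ : MeasurableSpace E := borel E
  have : BorelSpace E := ⟨rfl⟩
  let h : E → E := fun x => G x - x
  have hh : ContDiff ℝ 1 h := hG.sub contDiff_id
  have hdiff : Differentiable ℝ h := hh.differentiable (by norm_num)
  have hfc : Continuous (fderiv ℝ h) := hh.continuous_fderiv (by norm_num)
  obtain ⟨L, hL⟩ := (isCompact_closedBall (0:E) 3).exists_bound_of_continuousOn hfc.continuousOn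
  have hL0 : 0 ≤ L := (norm_nonneg _).trans (hL 0 (by simp))
  have hlip : ∀ x ∈ closedBall (0:E) 3, ∀ y ∈ closedBall (0:E) 3, ‖h x - h y‖ ≤ L * ‖x - y‖ := by
    intro x hx y hy
    exact (convex_closedBall (0:E) 3).norm_image_sub_le_of_norm_fderiv_le
      (fun x _ => hdiff x) hL hy hx
  obtain ⟨k, hk1, hk2, hk3⟩ := ext_zero_lip h 3 L hL0 hlip (fun x hx => by simp [h, hid x hx])
  have hdetc : Continuous (fun M : E →L[ℝ] E => M.det) := ContinuousLinearMap.continuous_det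
  have hev : ∀ᶠ M in nhds (ContinuousLinearMap.id ℝ E), 0 < M.det := by
    refine hdetc.continuousAt.eventually_const_lt ?_
    simp [ContinuousLinearMap.det]
  obtain ⟨ε, hε, hball⟩ := Metric.eventually_nhds_iff.1 hev
  obtain ⟨t0, ht0, ht1, ht2⟩ : ∃ t0 : ℝ, 0 < t0 ∧ t0 * L ≤ 1/2 ∧ t0 * L < ε := by
    have hm : 0 < min (1/2) (ε/2) := by positivity
    refine ⟨min (1/2) (ε/2) / (L+1), by positivity, ?_, ?_⟩
    all_goals
      have : min (1/2) (ε/2) / (L+1) * L ≤ min (1/2) (ε/2) := by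
        rw [div_mul_eq_mul_div, div_le_iff₀ (by positivity)]
        nlinarith
    · exact this.trans (min_le_left _ _)
    · exact (this.trans (min_le_right _ _)).trans_lt (by linarith)
  have hint : ∀ t : ℝ, 0 ≤ t → t ≤ t0 →
      ∫ x in ball (0:E) 3, (ContinuousLinearMap.id ℝ E + t • fderiv ℝ h x).det
        = (volume : Measure E).real (ball 0 3) := by
    intro t ht htt
    have htL : t * L ≤ t0 * L := mul_le_mul_of_nonneg_right htt hL0
    obtain ⟨hinj, him⟩ := perturb_bij k 3 L t ht (htL.trans ht1) hk2 hk3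
    have him' : (fun x => x + t • h x) '' ball 0 3 = ball 0 3 := by
      refine Eq.trans ?_ him
      refine image_congr fun x hx => ?_
      rw [hk1 x (ball_subset_closedBall hx)]
    have hinj' : InjOn (fun x => x + t • h x) (ball 0 3) := by
      intro x hx y hy hxy
      apply hinj
      simpa only [hk1 x (ball_subset_closedBall hx), hk1 y (ball_subset_closedBall hy)] using hxy
    have := integral_image_eq_integral_abs_det_fderiv_smul (volume : Measure E)
      (s := ball (0:E) 3) measurableSet_ball (f := fun x => x + t • h x)
      (f' := fun x => ContinuousLinearMap.id ℝ E + t • fderiv ℝ h x)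
      (fun x _ => ((hasFDerivAt_id x).add ((hdiff x).hasFDerivAt.const_smul t)).hasFDerivWithinAt)
      hinj' (fun _ => (1:ℝ))
    rw [him'] at this
    simp only [smul_eq_mul, mul_one, integral_const, measureReal_restrict_apply_univ] at this
    rw [this]
    refine setIntegral_congr_fun measurableSet_ball fun x hx => ?_
    refine (abs_of_pos (hball ?_)).symm
    rw [dist_eq_norm, add_sub_cancel_left, norm_smul, Real.norm_eq_abs, abs_of_nonneg ht]
    exact (mul_le_mul_of_nonneg_left (hL x (ball_subset_closedBall hx)) ht).trans_lt
      (htL.trans_lt ht2)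
  let v : Fin (Module.finrank ℝ E + 1) → ℝ := fun j => t0 / ((j : ℕ) + 1)
  have hv : Function.Injective v := by
    intro i j hij
    simp only [v] at hij
    rw [div_eq_div_iff (by positivity) (by positivity)] at hij
    have := mul_left_cancel₀ ht0.ne' hij
    have : (j : ℕ) = i := by exact_mod_cast add_right_cancel this
    exact Fin.ext this.symm
  obtain ⟨c, hc⟩ := interp_det (E := E) v hv
  have hcs : ∑ j, c j = 1 := by
    have := hc 0
    simpa [ContinuousLinearMap.det] using this.symm
  have hzero : ∀ x, (ContinuousLinearMap.id ℝ E + fderiv ℝ h x).det = 0 := by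
    intro x
    have hGd : DifferentiableAt ℝ G x := hG.differentiable (by norm_num) x
    have e1 : ContinuousLinearMap.id ℝ E + fderiv ℝ h x = fderiv ℝ G x := by
      have : fderiv ℝ h x = fderiv ℝ G x - ContinuousLinearMap.id ℝ E :=
        (hGd.hasFDerivAt.sub (hasFDerivAt_id x)).fderiv
      rw [this]; abel
    rw [e1]
    by_contra hne
    have hsurj : Function.Surjective (fderiv ℝ G x) := by
      have hu : IsUnit (LinearMap.det (fderiv ℝ G x : E →ₗ[ℝ] E)) := isUnit_iff_ne_zero.2 hne
      have := (LinearMap.equivOfDetNeZero (fderiv ℝ G x : E →ₗ[ℝ] E) hne).surjective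
      exact this
    obtain ⟨w, hw⟩ := hsurj (G x)
    have hd := (hGd.hasFDerivAt.norm_sq)
    have hconst : (fun y => ‖G y‖^2) = fun _ => (9:ℝ) := by
      funext y; rw [hn y]; norm_num
    rw [hconst] at hd
    have := hd.unique (hasFDerivAt_const _ _)
    have := DFunLike.congr_fun this w
    simp [hw, hn x] at this
  have hfin : ∫ x in ball (0:E) 3, (ContinuousLinearMap.id ℝ E + fderiv ℝ h x).det
      = (volume : Measure E).real (ball 0 3) := by
    have hc' : (fun x => (ContinuousLinearMap.id ℝ E + fderiv ℝ h x).det) = fun x =>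
      ∑ j, (ContinuousLinearMap.id ℝ E + v j • fderiv ℝ h x).det * c j := funext fun x => hc _
    rw [hc', integral_finsetSum]
    · simp_rw [integral_mul_const]
      rw [Finset.sum_congr rfl (fun j _ => by
        rw [hint (v j) (by positivity) (div_le_self ht0.le (by simp))])]
      rw [← Finset.mul_sum, hcs, mul_one]
    · intro j _
      have : Continuous fun x => (ContinuousLinearMap.id ℝ E + v j • fderiv ℝ h x).det * c j := by
        exact (hdetc.comp (by fun_prop)).mul continuous_const
      exact (this.continuousOn.integrableOn_compact (isCompact_closedBall (0:E) 3)).mono_set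
        ball_subset_closedBall
  simp only [hzero, integral_zero] at hfin
  have : 0 < (volume : Measure E).real (ball 0 3) :=
    ENNReal.toReal_pos (measure_ball_pos _ _ (by norm_num)).ne' measure_ball_lt_top.ne
  linarith

lemma brouwer_aux {E : Type*} [NormedAddCommGroup E] [InnerProductSpace ℝ E]
    [FiniteDimensional ℝ E] (g : E → E) (hg : Continuous g) (hb : ∀ x, ‖g x‖ ≤ 1) :
    ∃ x, g x = x := by
  by_contra! hne
  obtain ⟨x0, -, hx0⟩ := (isCompact_closedBall (0:E) 2).exists_isMinOn ⟨0, by simp⟩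
    (f := fun x => ‖g x - x‖) (by fun_prop)
  set δ := ‖g x0 - x0‖ with hδ
  have hδ0 : 0 < δ := norm_pos_iff.2 (sub_ne_zero.2 (hne x0))
  obtain ⟨f, hf, hfa, -⟩ := hg.exists_contDiff_approx 1 (ε := fun _ => min (1/2) δ)
    continuous_const (fun _ => by positivity)
  have hfb : ∀ x, ‖f x‖ ≤ 3/2 := by
    intro x
    have h1 := (hfa x).trans_le (min_le_left _ _)
    rw [dist_eq_norm] at h1
    have h2 := norm_le_norm_add_norm_sub' (f x) (g x)
    linarith [hb x]
  have hfn : ∀ x, f x ≠ x := by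
    intro x hx
    have h1 := (hfa x).trans_le (min_le_right _ _)
    have h2 : δ ≤ ‖g x - x‖ := hx0 (by
      simp only [mem_closedBall, dist_zero_right]
      rw [← hx]; linarith [hfb x])
    rw [hx, dist_comm, dist_eq_norm] at h1
    linarith
  let b : ContDiffBump (0:E) := ⟨2, 3, by norm_num, by norm_num⟩
  let F : E → E := fun x => x - b x • f x
  have hFne : ∀ x, F x ≠ 0 := by
    intro x hx
    have hx' : x = b x • f x := sub_eq_zero.1 hx
    have hb1 : ‖x‖ ≤ 3/2 := by
      rw [hx', norm_smul, Real.norm_eq_abs, abs_of_nonneg b.nonneg]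
      nlinarith [hfb x, b.le_one (x := x), b.nonneg (x := x), norm_nonneg (f x)]
    have hb2 : b x = 1 := b.one_of_mem_closedBall (by
      simp only [mem_closedBall, dist_zero_right]; show ‖x‖ ≤ 2; linarith)
    rw [hb2, one_smul] at hx'
    exact hfn x hx'.symm
  have hFc : ContDiff ℝ 1 F := contDiff_id.sub ((b.contDiff).smul hf)
  refine no_retraction (fun x => (3 / ‖F x‖) • F x) ?_ ?_ ?_
  · exact (contDiff_const.div (hFc.norm ℝ hFne) (fun x => (norm_ne_zero_iff.2 (hFne x)))).smul hFc
  · intro x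
    have := norm_pos_iff.2 (hFne x)
    rw [norm_smul, norm_div, norm_norm]
    field_simp
    norm_num
  · intro x hx
    have hb0 : b x = 0 := b.zero_of_le_dist (by rw [dist_zero_right, hx])
    have : F x = x := by simp [F, hb0]
    simp only [this, hx]
    norm_num

/-- Schauder's fixed point theorem. -/
lemma schauder_aux {Y : Type*} [NormedAddCommGroup Y] [NormedSpace ℝ Y]
    (A : Set Y) (hA : A.Nonempty) (hcv : Convex ℝ A) (K : Set Y) (hK : IsCompact K) (hKA : K ⊆ A)
    (f : Y → Y) (hf : ContinuousOn f A) (hfK : ∀ x ∈ A, f x ∈ K) : ∃ u ∈ A, f u = u := by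
  classical
  have approx : ∀ ε > 0, ∃ u ∈ A, ‖f u - u‖ ≤ ε := by
    intro ε hε
    obtain ⟨s, hsK, hcov⟩ := hK.elim_nhds_subcover (fun y => ball y ε)
      (fun y _ => ball_mem_nhds y hε)
    obtain ⟨a, ha⟩ := hA
    let Φ : EuclideanSpace ℝ s → Y := fun p => (max 1 (∑ i, max (p i) 0))⁻¹ •
      ((∑ i : s, max (p i) 0 • (i : Y)) + max (1 - ∑ i, max (p i) 0) 0 • a)
    have hΦc : Continuous Φ := by
      have h0 : ∀ p : EuclideanSpace ℝ s, max 1 (∑ i, max (p i) 0) ≠ 0 := fun p =>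
        (lt_of_lt_of_le one_pos (le_max_left _ _)).ne'
      have h1 : Continuous fun p : EuclideanSpace ℝ s => max 1 (∑ i, max (p i) 0) := by fun_prop
      exact (h1.inv₀ h0).smul (by fun_prop)
    have hΦA : ∀ p, Φ p ∈ A := by
      intro p
      set S := ∑ i, max (p i) 0 with hS
      have hS0 : 0 ≤ S := Finset.sum_nonneg fun i _ => le_max_right _ _
      have hD : 0 < max 1 S := lt_of_lt_of_le one_pos (le_max_left _ _)
      have := hcv.sum_mem (t := (Finset.univ : Finset (Option s)))
        (w := fun o => o.elim ((max 1 S)⁻¹ * max (1 - S) 0) (fun i => (max 1 S)⁻¹ * max (p i) 0))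
        (z := fun o => o.elim a (fun i => (i : Y))) ?_ ?_ ?_
      · convert this using 1
        simp only [Fintype.sum_option, Option.elim_none, Option.elim_some, Φ, smul_add,
          Finset.smul_sum, smul_smul]
        rw [add_comm]
      · rintro (_ | i) _
        · simp only [Option.elim_none]; positivity
        · simp only [Option.elim_some]; positivity
      · simp only [Fintype.sum_option, Option.elim_none, Option.elim_some]
        rw [← Finset.mul_sum, ← mul_add, ← hS]
        have : max (1 - S) 0 + S = max 1 S := by
          rw [max_add]; simp
        rw [this, inv_mul_cancel₀ hD.ne']
      · rintro (_ | i) _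
        · exact ha
        · exact hKA (hsK _ i.2)
    have hΦs : ∀ p : EuclideanSpace ℝ s, (∀ i, 0 ≤ p i) → ∑ i, p i = 1 → Φ p = ∑ i : s, p i • (i : Y) := by
      intro p hp hp1
      simp only [Φ]
      simp only [max_eq_left (hp _), hp1]
      simp
    let W : Y → s → ℝ := fun y i => max (ε - ‖y - i‖) 0
    have hWc : ∀ i, Continuous fun y => W y i := fun i => by
      simp only [W]; fun_prop
    have hW0 : ∀ y i, 0 ≤ W y i := fun y i => le_max_right _ _
    have hWpos : ∀ y ∈ K, 0 < ∑ i, W y i := by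
      intro y hy
      obtain ⟨z, hz, hyz⟩ := mem_iUnion₂.1 (hcov hy)
      refine lt_of_lt_of_le ?_ (Finset.single_le_sum (fun i _ => hW0 y i)
        (Finset.mem_univ (⟨z, hz⟩ : s)))
      rw [mem_ball, dist_eq_norm] at hyz
      exact lt_max_of_lt_left (by linarith)
    have hfΦ : Continuous fun p => f (Φ p) := hf.comp_continuous hΦc hΦA
    let g : EuclideanSpace ℝ s → EuclideanSpace ℝ s := fun p => WithLp.toLp 2 (fun i => W (f (Φ p)) i / ∑ j, W (f (Φ p)) j)
    have hgc : Continuous g := by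
      refine (PiLp.continuous_toLp 2 _).comp (continuous_pi fun i => ?_)
      refine ((hWc i).comp hfΦ).div (continuous_finsetSum _ fun j _ => (hWc j).comp hfΦ) ?_
      exact fun p => (hWpos _ (hfK _ (hΦA p))).ne'
    have hg0 : ∀ p i, 0 ≤ g p i := fun p i =>
      div_nonneg (hW0 _ _) (hWpos _ (hfK _ (hΦA p))).le
    have hg1 : ∀ p, ∑ i, g p i = 1 := by
      intro p
      simp only [g]
      rw [← Finset.sum_div, div_self (hWpos _ (hfK _ (hΦA p))).ne']
    have hgb : ∀ p, ‖g p‖ ≤ 1 := by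
      intro p
      rw [EuclideanSpace.norm_eq, Real.sqrt_le_iff]
      refine ⟨zero_le_one, ?_⟩
      rw [one_pow]
      refine le_trans ?_ (hg1 p).le
      refine Finset.sum_le_sum fun i _ => ?_
      have : g p i ≤ 1 := by
        rw [← hg1 p]
        exact Finset.single_le_sum (fun i _ => hg0 p i) (Finset.mem_univ i)
      rw [Real.norm_eq_abs, sq_abs]
      nlinarith [hg0 p i]
    obtain ⟨p, hp⟩ := brouwer_aux g hgc hgb
    refine ⟨Φ p, hΦA p, ?_⟩
    have hp0 : ∀ i, 0 ≤ p i := fun i => by rw [← hp]; exact hg0 p i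
    have hp1 : ∑ i, p i = 1 := by rw [← hp]; rw [hp]; rw [← hg1 p, hp]
    have e : f (Φ p) - Φ p = ∑ i : s, p i • (f (Φ p) - (i : Y)) := by
      simp only [smul_sub, Finset.sum_sub_distrib]
      rw [← Finset.sum_smul, hp1, one_smul, ← hΦs p hp0 hp1]
    rw [e]
    refine (norm_sum_le _ _).trans ?_
    calc ∑ i : s, ‖p i • (f (Φ p) - (i : Y))‖ ≤ ∑ i : s, p i * ε := by
          refine Finset.sum_le_sum fun i _ => ?_
          rw [norm_smul, Real.norm_eq_abs, abs_of_nonneg (hp0 i)]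
          rcases le_or_gt ‖f (Φ p) - (i : Y)‖ ε with h | h
          · exact mul_le_mul_of_nonneg_left h (hp0 i)
          · have hw : W (f (Φ p)) i = 0 := max_eq_right (by linarith)
            have : p i = 0 := by
              rw [← hp]; simp only [g]; rw [hw, zero_div]
            rw [this]; simp
      _ = ε := by rw [← Finset.sum_mul, hp1, one_mul]
  choose u huA hu using fun n : ℕ => approx (1 / ((n:ℝ) + 1)) (by positivity)
  obtain ⟨y, hyK, φ, hφ, hlim⟩ := hK.tendsto_subseq (fun n => hfK _ (huA n))
  have hd : Filter.Tendsto (fun n => f (u n) - u n) Filter.atTop (nhds 0) :=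
    squeeze_zero_norm hu tendsto_one_div_add_atTop_nhds_zero_nat
  have hul : Filter.Tendsto (fun n => u (φ n)) Filter.atTop (nhds y) := by
    have := hlim.sub (hd.comp hφ.tendsto_atTop)
    simpa [Function.comp_def] using this
  have hyA := hKA hyK
  have h2 : Filter.Tendsto (fun n => f (u (φ n))) Filter.atTop (nhds (f y)) :=
    (hf y hyA).tendsto.comp (tendsto_nhdsWithin_iff.2 ⟨hul, Filter.Eventually.of_forall
      fun n => huA _⟩)
  exact ⟨y, hyA, tendsto_nhds_unique h2 hlim⟩

lemma kannan_fixed {Y : Type*} [NormedAddCommGroup Y] [CompleteSpace Y]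
    (A : Set Y) (hA : A.Nonempty) (hcl : IsClosed A) (S : Y → Y) (hS : ∀ u ∈ A, S u ∈ A)
    (k : ℝ) (hk0 : 0 ≤ k) (hk : k < 1/2)
    (h : ∀ u ∈ A, ∀ v ∈ A, ‖S u - S v‖ ≤ k * (‖S u - u‖ + ‖S v - v‖)) :
    ∃ u ∈ A, S u = u := by
  obtain ⟨a, ha⟩ := hA
  let x : ℕ → Y := fun n => S^[n] a
  have hx : ∀ n, x (n+1) = S (x n) := fun n => Function.iterate_succ_apply' S n a
  have hxA : ∀ n, x n ∈ A := by
    intro n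
    induction n with
    | zero => exact ha
    | succ n ih => rw [hx]; exact hS _ ih
  set q := k / (1 - k) with hq
  have hk1 : 0 < 1 - k := by linarith
  have hq0 : 0 ≤ q := div_nonneg hk0 hk1.le
  have hq1 : q < 1 := by rw [hq, div_lt_one hk1]; linarith
  have hstep : ∀ n, ‖x (n+2) - x (n+1)‖ ≤ q * ‖x (n+1) - x n‖ := by
    intro n
    have := h _ (hxA (n+1)) _ (hxA n)
    rw [← hx, ← hx] at this
    rw [hq, div_mul_eq_mul_div, le_div_iff₀ hk1]
    have e : n + 1 + 1 = n + 2 := rfl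
    rw [e] at this
    nlinarith
  have hgeo : ∀ n, ‖x (n+1) - x n‖ ≤ ‖x 1 - x 0‖ * q ^ n := by
    intro n
    induction n with
    | zero => simp
    | succ n ih =>
      refine (hstep n).trans ?_
      rw [pow_succ]
      nlinarith
  have hC : CauchySeq x := cauchySeq_of_le_geometric q _ hq1 (fun n => by
    rw [dist_comm, dist_eq_norm]; exact hgeo n)
  obtain ⟨u, hu⟩ := cauchySeq_tendsto_of_complete hC
  have huA : u ∈ A := hcl.mem_of_tendsto hu (Filter.Eventually.of_forall hxA)
  refine ⟨u, huA, ?_⟩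
  have hu1 : Filter.Tendsto (fun n => x (n+1)) Filter.atTop (nhds u) :=
    (Filter.tendsto_add_atTop_iff_nat 1).2 hu
  have hle : ‖S u - u‖ ≤ k * (‖S u - u‖ + ‖u - u‖) := by
    refine le_of_tendsto_of_tendsto' (f := fun n => ‖S u - x (n+1)‖)
      (g := fun n => k * (‖S u - u‖ + ‖x (n+1) - x n‖)) (b := Filter.atTop) ?_ ?_ ?_
    · exact (tendsto_const_nhds.sub hu1).norm
    · exact (tendsto_const_nhds.add (hu1.sub hu).norm).const_mul k
    · intro n
      rw [hx]
      exact h u huA _ (hxA n)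
  rw [sub_self, norm_zero, add_zero] at hle
  have : ‖S u - u‖ = 0 := le_antisymm (by nlinarith [norm_nonneg (S u - u)]) (norm_nonneg _)
  exact sub_eq_zero.1 (norm_eq_zero.1 this)


/-- Corollary: Krasnosel'skii-type theorem for continuous Kannan type equicontraction
mappings. -/
theorem kannan_equicontraction_krasnoselskii_continuous
    {Y : Type*} [NormedAddCommGroup Y] [NormedSpace ℝ Y] [CompleteSpace Y]
    {ζ : Type*} [MetricSpace ζ] [CompleteSpace ζ]
    (A : Set Y) (hA_ne : A.Nonempty) (hA_bdd : Bornology.IsBounded A)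
    (hA_cl : IsClosed A) (hA_cv : Convex ℝ A)
    (C : Y → ζ)
    (hC_cont : ContinuousOn C A)
    (hC_cpt : IsCompact (closure (C '' A)))
    (T : Y → ζ → Y)
    (hT_maps : ∀ u ∈ A, ∀ v ∈ closure (C '' A), T u v ∈ A)
    (hT_cont : ContinuousOn (fun p : Y × ζ => T p.1 p.2) (A ×ˢ closure (C '' A)))
    (hT_kannan : ∃ k : ℝ, 0 ≤ k ∧ k < 1 / 2 ∧
      ∀ u₁ ∈ A, ∀ u₂ ∈ A, ∀ v ∈ closure (C '' A),
        ‖T u₁ v - T u₂ v‖ ≤ k * (‖T u₁ v - u₁‖ + ‖T u₂ v - u₂‖)) :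
    ∃ u ∈ A, T u (C u) = u := by
  obtain ⟨k, hk0, hk, hkan⟩ := hT_kannan
  set Q := closure (C '' A) with hQ
  have hR : ∀ v ∈ Q, ∃ u ∈ A, T u v = u := fun v hv =>
    kannan_fixed A hA_ne hA_cl (fun u => T u v) (fun u hu => hT_maps u hu v hv) k hk0 hk
      (fun u hu w hw => hkan u hu w hw v hv)
  choose! R hRA hRf using hR
  have hRc : ContinuousOn R Q := by
    intro v hv
    have h1 : ContinuousOn (fun w => T (R v) w) Q :=
      hT_cont.comp (f := fun w => (R v, w)) (by fun_prop) (fun w hw => ⟨hRA v hv, hw⟩)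
    have h2 : Filter.Tendsto (fun w => (1 + k) * ‖T (R v) w - R v‖) (nhdsWithin v Q) (nhds 0) := by
      have := (((h1 v hv).tendsto.sub_const (R v)).norm).const_mul (1 + k)
      simpa [hRf v hv] using this
    refine tendsto_iff_norm_sub_tendsto_zero.2 (squeeze_zero' ?_ ?_ h2)
    · exact Filter.Eventually.of_forall fun _ => norm_nonneg _
    · filter_upwards [self_mem_nhdsWithin] with w hw
      have h3 := hkan (R w) (hRA w hw) (R v) (hRA v hv) w hw
      rw [hRf w hw, sub_self, norm_zero, zero_add] at h3
      have h4 := norm_sub_le_norm_sub_add_norm_sub (R w) (T (R v) w) (R v)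
      linarith
  have hCQ : ∀ u ∈ A, C u ∈ Q := fun u hu => subset_closure (mem_image_of_mem C hu)
  obtain ⟨u, hu, hfu⟩ := schauder_aux A hA_ne hA_cv (R '' Q) (hC_cpt.image_of_continuousOn hRc)
    (by rintro _ ⟨v, hv, rfl⟩; exact hRA v hv) (fun u => R (C u)) (hRc.comp hC_cont hCQ)
    (fun u hu => mem_image_of_mem R (hCQ u hu))
  refine ⟨u, hu, ?_⟩
  have := hRf (C u) (hCQ u hu)
  rwa [hfu] at this
end

section
/- Let Y be a finite-dimensional Banach space, A a nonempty bounded, closed, convex subset of Y, and (ζ, ρ) a complete metric space. Let C : A → ζ be a compact mapping and let T : A × C(A) → Y be a Kannan type equicontraction mapping such that the mapping η : A → A defined by η(u) = T(u, C(u)) is well defined (maps A into A) and continuous. Then the equation T(u, C(u)) = u has a solution u ∈ A. -/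
open Set Filter Topology MeasureTheory

/-- Nearest point projection onto a closed convex set. -/
theorem kn_exists_proj {E : Type*} [NormedAddCommGroup E] [InnerProductSpace ℝ E] [CompleteSpace E]
    (K : Set E) (hne : K.Nonempty) (hcl : IsClosed K) (hcv : Convex ℝ K) :
    ∃ p : E → E, (∀ x, p x ∈ K) ∧ (∀ x ∈ K, p x = x) ∧ (∀ x y, ‖p x - p y‖ ≤ ‖x - y‖) ∧
      ∀ x, ∀ w ∈ K, inner ℝ (x - p x) (w - p x) ≤ 0 := by
  have h := exists_norm_eq_iInf_of_complete_convex hne hcl.isComplete hcv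
  choose p hpK hp using h
  have hin : ∀ x, ∀ w ∈ K, inner ℝ (x - p x) (w - p x) ≤ 0 := fun x =>
    (norm_eq_iInf_iff_real_inner_le_zero hcv (hpK x)).1 (hp x)
  refine ⟨p, hpK, ?_, ?_, hin⟩
  · intro x hx
    have h1 := hin x x hx
    rw [real_inner_self_eq_norm_sq] at h1
    have h2 : ‖x - p x‖ = 0 := by nlinarith [norm_nonneg (x - p x)]
    exact (sub_eq_zero.1 (norm_eq_zero.1 h2)).symm
  · intro x y
    have h1 := hin x (p y) (hpK y)
    have h2 := hin y (p x) (hpK x)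
    have h3 : ‖p x - p y‖ ^ 2 ≤ inner ℝ (x - y) (p x - p y) := by
      rw [← real_inner_self_eq_norm_sq]
      have e : inner ℝ (p x - p y) (p x - p y) = inner ℝ (x - y) (p x - p y)
          + inner ℝ (x - p x) (p y - p x) + inner ℝ (y - p y) (p x - p y) := by
        simp only [inner_sub_left, inner_sub_right]; ring
      linarith
    have h4 := real_inner_le_norm (x - y) (p x - p y)
    by_contra hlt
    push Not at hlt
    have : 0 < ‖p x - p y‖ := lt_of_le_of_lt (norm_nonneg _) hlt
    nlinarith

/-- Lagrange interpolation for `t ↦ det (1 + t M)`. -/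
theorem kn_interp {E : Type*} [NormedAddCommGroup E] [NormedSpace ℝ E] [FiniteDimensional ℝ E]
    (ε : ℝ) (hε : 0 < ε) :
    ∃ (s : Finset ℕ) (c t : ℕ → ℝ), (∑ i ∈ s, c i = 1) ∧ (∀ i, 0 < t i ∧ t i ≤ ε) ∧
      ∀ M : E →L[ℝ] E, (1 + M).det = ∑ i ∈ s, c i * (1 + t i • M).det := by
  classical
  set n := Module.finrank ℝ E with hn
  let b := Module.finBasis ℝ E
  let t : ℕ → ℝ := fun i => ε / (i + 1)
  have hinj : Function.Injective t := by
    intro i j hij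
    have hi : (i : ℝ) + 1 ≠ 0 := by positivity
    have hj : (j : ℝ) + 1 ≠ 0 := by positivity
    simp only [t] at hij
    rw [div_eq_div_iff hi hj] at hij
    have := mul_left_cancel₀ hε.ne' hij
    have h2 : (i : ℝ) = j := by linarith
    exact_mod_cast h2
  let s := Finset.range (n + 1)
  refine ⟨s, fun i => (Lagrange.basis s t i).eval 1, t, ?_, ?_, ?_⟩
  · rw [← Polynomial.eval_finsetSum, Lagrange.sum_basis hinj.injOn ⟨0, by simp [s]⟩,
      Polynomial.eval_one]
  · intro i
    refine ⟨by positivity, ?_⟩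
    apply div_le_self hε.le
    have : (0 : ℝ) ≤ i := by positivity
    linarith
  · intro M
    let A := LinearMap.toMatrix b b (M : E →ₗ[ℝ] E)
    let P : Polynomial ℝ := Matrix.det ((Polynomial.X : Polynomial ℝ) • A.map Polynomial.C
      + (1 : Matrix (Fin n) (Fin n) ℝ).map Polynomial.C)
    have hev : ∀ r : ℝ, P.eval r = (1 + r • M).det := by
      intro r
      have h1 : (1 + r • M).det = LinearMap.det ((1 + r • M : E →L[ℝ] E) : E →ₗ[ℝ] E) := rfl
      rw [h1, ← LinearMap.det_toMatrix b]
      have h2 : LinearMap.toMatrix b b ((1 + r • M : E →L[ℝ] E) : E →ₗ[ℝ] E) = 1 + r • A := by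
        have : ((1 + r • M : E →L[ℝ] E) : E →ₗ[ℝ] E) = LinearMap.id + r • (M : E →ₗ[ℝ] E) := rfl
        rw [this, map_add, map_smul, LinearMap.toMatrix_id]
      rw [h2]
      simp only [P]
      rw [← Polynomial.coe_evalRingHom, RingHom.map_det]
      congr 1
      ext i j
      by_cases hij : i = j
      · subst hij; simp; ring
      · simp [hij]; ring
    have hdeg : P.degree < s.card := by
      have h1 : P.natDegree ≤ n := by
        have h0 := Polynomial.natDegree_det_X_add_C_le A 1
        rwa [Fintype.card_fin] at h0
      refine lt_of_le_of_lt Polynomial.degree_le_natDegree ?_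
      simp only [s, Finset.card_range]
      exact_mod_cast Nat.lt_succ_of_le h1
    have h3 := congrArg (Polynomial.eval 1) (Lagrange.eq_interpolate (s := s) hinj.injOn hdeg)
    rw [hev, one_smul] at h3
    rw [h3, Lagrange.interpolate_apply, Polynomial.eval_finsetSum]
    refine Finset.sum_congr rfl fun i _ => ?_
    rw [Polynomial.eval_mul, Polynomial.eval_C, hev, mul_comm]

/-- No `C¹` retraction. -/
theorem kn_no_retraction {E : Type*} [NormedAddCommGroup E] [InnerProductSpace ℝ E]
    [FiniteDimensional ℝ E] (G : E → E) (hG : ContDiff ℝ 1 G) (R : ℝ) (hR : 0 < R)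
    (hnorm : ∀ x, ‖G x‖ = R) (hid : ∀ x, ‖x‖ = R → G x = x) : False := by
  letI : MeasurableSpace E := borel E
  haveI : BorelSpace E := ⟨rfl⟩
  have hcomplete : CompleteSpace E := FiniteDimensional.complete ℝ E
  let B : Set E := Metric.closedBall 0 R
  have hBc : IsCompact B := isCompact_closedBall _ _
  have hBcv : Convex ℝ B := convex_closedBall _ _
  have hBmem : ∀ x, x ∈ B ↔ ‖x‖ ≤ R := fun x => by simp [B]
  let h : E → E := fun x => G x - x
  have hh : ContDiff ℝ 1 h := hG.sub contDiff_id
  have hdiff : Differentiable ℝ h := hh.differentiable (by norm_num)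
  have hGdiff : Differentiable ℝ G := hG.differentiable (by norm_num)
  have hfc : Continuous (fderiv ℝ h) := hh.continuous_fderiv (by norm_num)
  obtain ⟨L0, hL0⟩ := hBc.exists_bound_of_continuousOn (f := fderiv ℝ h) hfc.continuousOn
  obtain ⟨L, hLpos, hL⟩ : ∃ L : NNReal, 0 < L ∧ ∀ x ∈ B, ‖fderiv ℝ h x‖₊ ≤ L := by
    refine ⟨Real.toNNReal (max L0 1), by simp, fun x hx => ?_⟩
    rw [← NNReal.coe_le_coe, coe_nnnorm, Real.coe_toNNReal _ (by positivity)]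
    exact (hL0 x hx).trans (le_max_left _ _)
  have hLip : LipschitzOnWith L h B :=
    hBcv.lipschitzOnWith_of_nnnorm_fderiv_le (fun x _ => hdiff x) hL
  have hLpos' : (0 : ℝ) < L := by exact_mod_cast hLpos
  have hLip' : ∀ x ∈ B, ∀ y ∈ B, ‖h x - h y‖ ≤ L * ‖x - y‖ := by
    intro x hx y hy
    exact hLip.norm_sub_le hx hy
  obtain ⟨δ, hδ, hdet⟩ : ∃ δ > 0, ∀ M : E →L[ℝ] E, ‖M‖ < δ → 0 < (1 + M).det := by
    have hc : Continuous fun M : E →L[ℝ] E => (1 + M).det :=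
      ContinuousLinearMap.continuous_det.comp (continuous_const.add continuous_id)
    have h0 : (0 : ℝ) < (1 + (0 : E →L[ℝ] E)).det := by
      have : (1 + (0 : E →L[ℝ] E)).det = 1 := by
        rw [add_zero]; exact LinearMap.det_id
      rw [this]; norm_num
    have := hc.continuousAt.eventually (lt_mem_nhds h0)
    obtain ⟨δ, hδ, hh⟩ := Metric.eventually_nhds_iff.1 this
    exact ⟨δ, hδ, fun M hM => hh (by simpa using hM)⟩
  let ε : ℝ := min (1 / 2) (min (1 / (2 * L)) (δ / (2 * L)))
  have hε : 0 < ε := by positivity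
  obtain ⟨s, c, t, hc1, ht, hint⟩ := kn_interp (E := E) ε hε
  obtain ⟨p, hpB, hpid, hp1, hpin⟩ := kn_exists_proj B ⟨0, by simp [B, hR.le]⟩ hBc.isClosed hBcv
  let μ : Measure E := Measure.addHaar
  have key : ∀ r : ℝ, 0 < r → r ≤ ε →
      ∫ x in B, (1 + r • fderiv ℝ h x).det ∂μ = μ.real B := by
    intro r hr hrε
    have hr1 : r ≤ 1 / 2 := hrε.trans (min_le_left _ _)
    have hrL : r * L ≤ 1 / 2 := by
      have : r ≤ 1 / (2 * L) := hrε.trans ((min_le_right _ _).trans (min_le_left _ _))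
      rw [le_div_iff₀ (by positivity)] at this
      linarith
    have hrδ : r * L < δ := by
      have : r ≤ δ / (2 * L) := hrε.trans ((min_le_right _ _).trans (min_le_right _ _))
      rw [le_div_iff₀ (by positivity)] at this
      linarith
    let F : E → E := fun x => x + r • h x
    have hFd : ∀ x ∈ B, HasFDerivWithinAt F (1 + r • fderiv ℝ h x) B x := by
      intro x _
      exact ((hasFDerivAt_id x).add ((hdiff x).hasFDerivAt.const_smul r)).hasFDerivWithinAt
    have hinj : InjOn F B := by
      intro x hx y hy hxy
      have h1 : x - y = r • (h y - h x) := by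
        have : x + r • h x = y + r • h y := hxy
        rw [smul_sub, sub_eq_sub_iff_add_eq_add, this]; abel
      have h2 : ‖x - y‖ ≤ 1 / 2 * ‖x - y‖ := by
        calc ‖x - y‖ = r * ‖h y - h x‖ := by
              conv_lhs => rw [h1]
              rw [norm_smul, Real.norm_of_nonneg hr.le]
          _ ≤ r * (L * ‖y - x‖) := by gcongr; exact hLip' y hy x hx
          _ = (r * L) * ‖x - y‖ := by rw [norm_sub_rev]; ring
          _ ≤ _ := by gcongr
      have h3 : ‖x - y‖ = 0 := by linarith [norm_nonneg (x - y)]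
      exact sub_eq_zero.1 (norm_eq_zero.1 h3)
    have himg : F '' B = B := by
      apply Subset.antisymm
      · rintro _ ⟨x, hx, rfl⟩
        rw [hBmem] at hx ⊢
        have e : F x = (1 - r) • x + r • G x := by
          simp only [F, h]; module
        rw [e]
        refine (norm_add_le _ _).trans ?_
        rw [norm_smul, norm_smul, hnorm, Real.norm_of_nonneg hr.le,
          Real.norm_of_nonneg (by linarith)]
        nlinarith
      · intro y hy
        let Φ : E → E := fun x => y - r • h (p x)
        have hΦ : ContractingWith (1 / 2) Φ := by
          refine ⟨by rw [← NNReal.coe_lt_coe]; norm_num, LipschitzWith.of_dist_le_mul ?_⟩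
          intro a b
          rw [dist_eq_norm, dist_eq_norm]
          calc ‖Φ a - Φ b‖ = r * ‖h (p b) - h (p a)‖ := by
                rw [← Real.norm_of_nonneg hr.le, ← norm_smul]
                congr 1; simp only [Φ]; module
            _ ≤ r * (L * ‖p b - p a‖) := by gcongr; exact hLip' _ (hpB _) _ (hpB _)
            _ ≤ r * (L * ‖b - a‖) := by gcongr; exact hp1 _ _
            _ = (r * L) * ‖a - b‖ := by rw [norm_sub_rev]; ring
            _ ≤ _ := by push_cast; gcongr
        have hfix : Φ (ContractingWith.fixedPoint Φ hΦ) = ContractingWith.fixedPoint Φ hΦ :=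
          hΦ.fixedPoint_isFixedPt
        set x := ContractingWith.fixedPoint Φ hΦ with hxdef
        have hxB : x ∈ B := by
          by_contra hxn
          have hpR : ‖p x‖ = R := by
            by_contra hne
            have hlt : ‖p x‖ < R := lt_of_le_of_ne ((hBmem _).1 (hpB x)) hne
            have hxp : 0 < ‖x - p x‖ := by
              rw [norm_pos_iff, sub_ne_zero]
              intro he; exact hxn (he ▸ hpB x)
            let e : ℝ := (R - ‖p x‖) / ‖x - p x‖
            have he : 0 < e := div_pos (by linarith) hxp
            have hw : p x + e • (x - p x) ∈ B := by
              rw [hBmem]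
              refine (norm_add_le _ _).trans ?_
              rw [norm_smul, Real.norm_of_nonneg he.le]
              simp only [e]
              rw [div_mul_cancel₀ _ hxp.ne']; linarith
            have := hpin x _ hw
            rw [add_sub_cancel_left, inner_smul_right, real_inner_self_eq_norm_sq] at this
            have : 0 < e * ‖x - p x‖ ^ 2 := by positivity
            linarith
          have hz : h (p x) = 0 := by simp [h, hid _ hpR]
          have : x = y := by rw [← hfix]; simp [Φ, hz]
          exact hxn (this ▸ hy)
        refine ⟨x, hxB, ?_⟩
        have h5 : y - r • h x = x := by simpa [Φ, hpid x hxB] using hfix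
        change x + r • h x = y
        rw [← h5]
        conv_lhs => rw [h5]
        conv_rhs => rw [← sub_add_cancel y (r • h x), h5]
    have hcv := integral_image_eq_integral_abs_det_fderiv_smul μ hBc.measurableSet hFd hinj
      (fun _ => (1 : ℝ))
    rw [himg] at hcv
    simp only [smul_eq_mul, mul_one] at hcv
    have h6 : ∫ x in B, (1 + r • fderiv ℝ h x).det ∂μ
        = ∫ x in B, |(1 + r • fderiv ℝ h x).det| ∂μ := by
      apply setIntegral_congr_fun hBc.measurableSet
      intro x hx
      refine (abs_of_pos (hdet _ ?_)).symm
      rw [norm_smul, Real.norm_of_nonneg hr.le]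
      refine lt_of_le_of_lt ?_ hrδ
      gcongr
      exact_mod_cast hL x hx
    rw [h6, ← hcv]
    simp
  have hzero : ∀ x, (1 + fderiv ℝ h x).det = 0 := by
    intro x
    have hfd : fderiv ℝ G x = 1 + fderiv ℝ h x := by
      have : HasFDerivAt h (fderiv ℝ G x - ContinuousLinearMap.id ℝ E) x :=
        (hGdiff x).hasFDerivAt.sub (hasFDerivAt_id x)
      rw [this.fderiv]
      exact (add_sub_cancel (1 : E →L[ℝ] E) _).symm
    rw [← hfd]
    by_contra hne
    have hne' : LinearMap.det (fderiv ℝ G x : E →ₗ[ℝ] E) ≠ 0 := hne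
    let e := LinearMap.equivOfDetNeZero (fderiv ℝ G x : E →ₗ[ℝ] E) hne'
    have hsurj : ∃ v, fderiv ℝ G x v = G x := ⟨e.symm (G x), e.apply_symm_apply (G x)⟩
    obtain ⟨v, hv⟩ := hsurj
    have h1 : HasFDerivAt (fun y => ‖G y‖ ^ 2) _ x := (hGdiff x).hasFDerivAt.norm_sq
    have h2 : (fun y => ‖G y‖ ^ 2) = fun _ => R ^ 2 := by ext y; rw [hnorm]
    rw [h2] at h1
    have h3 := congrArg (fun l : E →L[ℝ] ℝ => l v) (h1.unique (hasFDerivAt_const (R ^ 2) x))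
    simp [hv, hnorm] at h3
    exact hR.ne' h3
  have hsum : ∫ x in B, (1 + fderiv ℝ h x).det ∂μ = μ.real B := by
    rw [integral_congr_ae (Eventually.of_forall fun x => hint (fderiv ℝ h x)),
      integral_finsetSum]
    · simp_rw [integral_const_mul]
      rw [Finset.sum_congr rfl fun i _ => by rw [key (t i) (ht i).1 (ht i).2],
        ← Finset.sum_mul, hc1, one_mul]
    · intro i _
      apply ContinuousOn.integrableOn_compact hBc
      apply Continuous.continuousOn
      exact continuous_const.mul
        (ContinuousLinearMap.continuous_det.comp (continuous_const.add (hfc.const_smul (t i) : Continuous fun a => t i • fderiv ℝ h a)))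
  simp_rw [hzero] at hsum
  have hpos : 0 < μ.real B := by
    apply ENNReal.toReal_pos
    · exact (Metric.measure_closedBall_pos μ 0 hR).ne'
    · exact hBc.measure_lt_top.ne
  simp at hsum
  linarith

/-- Brouwer for globally defined bounded continuous maps. -/
theorem kn_brouwer_global {E : Type*} [NormedAddCommGroup E] [InnerProductSpace ℝ E]
    [FiniteDimensional ℝ E] (f : E → E) (hf : Continuous f) (R : ℝ) (hR : ∀ x, ‖f x‖ ≤ R) :
    ∃ x, f x = x := by
  by_contra hno
  push Not at hno
  have hR0 : 0 ≤ R := (norm_nonneg _).trans (hR 0)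
  obtain ⟨g, hg, hgf, -⟩ := hf.exists_contDiff_approx 1
    (ε := fun x => min 1 ‖f x - x‖) (by fun_prop)
    (fun x => lt_min one_pos (norm_pos_iff.2 (sub_ne_zero.2 (hno x))))
  let χ : ContDiffBump (0 : E) := ⟨R + 2, R + 3, by linarith, by linarith⟩
  let F : E → E := fun x => x - χ x • g x
  have hF : ContDiff ℝ 1 F := contDiff_id.sub (χ.contDiff.smul hg)
  have hgR : ∀ x, ‖g x‖ ≤ R + 1 := by
    intro x
    have h1 := (hgf x).trans_le (min_le_left _ _)
    rw [dist_eq_norm] at h1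
    have h2 := norm_le_norm_add_norm_sub' (g x) (f x)
    linarith [hR x]
  have hF0 : ∀ x, F x ≠ 0 := by
    intro x h0
    have h1 : x = χ x • g x := sub_eq_zero.1 h0
    have h2 : ‖x‖ ≤ R + 1 := by
      rw [h1, norm_smul, Real.norm_of_nonneg χ.nonneg]
      calc _ ≤ 1 * ‖g x‖ := by gcongr; exact χ.le_one
        _ ≤ R + 1 := by rw [one_mul]; exact hgR x
    have h3 : χ x = 1 := χ.one_of_mem_closedBall (by
      simp only [Metric.mem_closedBall, dist_zero_right]; change ‖x‖ ≤ R + 2; linarith)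
    rw [h3, one_smul] at h1
    have h4 := (hgf x).trans_le (min_le_right _ _)
    rw [← h1, dist_eq_norm, norm_sub_rev] at h4
    exact lt_irrefl _ h4
  let G : E → E := fun x => ((R + 4) * ‖F x‖⁻¹) • F x
  have hG : ContDiff ℝ 1 G :=
    (contDiff_const.mul ((hF.norm ℝ hF0).inv fun x => norm_ne_zero_iff.2 (hF0 x))).smul hF
  refine kn_no_retraction G hG (R + 4) (by linarith) ?_ ?_
  · intro x
    have := norm_ne_zero_iff.2 (hF0 x)
    simp only [G]
    rw [norm_smul, Real.norm_of_nonneg (by positivity)]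
    field_simp
  · intro x hx
    have h1 : χ x = 0 := χ.zero_of_le_dist (by
      rw [dist_zero_right, hx]; change R + 3 ≤ R + 4; linarith)
    have h2 : F x = x := by simp [F, h1]
    simp only [G]
    rw [h2, hx, mul_inv_cancel₀ (by linarith), one_smul]

/-- Brouwer fixed point theorem for compact convex sets. -/
theorem kn_brouwer {Y : Type*} [NormedAddCommGroup Y] [NormedSpace ℝ Y] [FiniteDimensional ℝ Y]
    (A : Set Y) (hne : A.Nonempty) (hbdd : Bornology.IsBounded A) (hcl : IsClosed A)
    (hcv : Convex ℝ A) (f : Y → Y) (hmaps : ∀ u ∈ A, f u ∈ A) (hf : ContinuousOn f A) :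
    ∃ u ∈ A, f u = u := by
  let E := EuclideanSpace ℝ (Fin (Module.finrank ℝ Y))
  let e : Y ≃L[ℝ] E := ContinuousLinearEquiv.ofFinrankEq (by simp [E])
  have hAc : IsCompact A := Metric.isCompact_of_isClosed_isBounded hcl hbdd
  let K : Set E := e '' A
  have hKc : IsCompact K := hAc.image e.continuous
  have hKcv : Convex ℝ K := hcv.linear_image (e : Y →ₗ[ℝ] E)
  obtain ⟨p, hpK, hpid, hp1, -⟩ := kn_exists_proj K (hne.image _) hKc.isClosed hKcv
  have hpc : Continuous p := by
    have : LipschitzWith 1 p := LipschitzWith.of_dist_le_mul fun x y => by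
      simpa [dist_eq_norm] using hp1 x y
    exact this.continuous
  have hsA : ∀ x, e.symm (p x) ∈ A := by
    intro x
    obtain ⟨a, ha, hax⟩ := hpK x
    rw [← hax, e.symm_apply_apply]; exact ha
  obtain ⟨R, hR⟩ := hKc.isBounded.exists_norm_le
  let F : E → E := fun x => e (f (e.symm (p x)))
  have hF : Continuous F :=
    e.continuous.comp (hf.comp_continuous (e.symm.continuous.comp hpc) hsA)
  have hFK : ∀ x, F x ∈ K := fun x => mem_image_of_mem _ (hmaps _ (hsA x))
  obtain ⟨x, hx⟩ := kn_brouwer_global F hF R fun x => hR _ (hFK x)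
  have hxK : x ∈ K := hx ▸ hFK x
  refine ⟨e.symm (p x), hsA x, ?_⟩
  rw [hpid x hxK]
  have h1 : e (f (e.symm (p x))) = x := hx
  rw [hpid x hxK] at h1
  exact (e.symm_apply_eq.2 h1.symm).symm

/-- The finite-dimensional case (via Darbo's theorem): if `Y` is a finite-dimensional
Banach space, `A ⊆ Y` nonempty, bounded, closed, convex, `C : A → ζ` a compact mapping,
and `T : A × C(A) → Y` a Kannan type equicontraction mapping such that
`η u = T u (C u)` maps `A` into `A` and is continuous, then `T (u, C u) = u`
has a solution in `A`. -/
theorem kannan_equicontraction_finiteDimensional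
    {Y : Type*} [NormedAddCommGroup Y] [NormedSpace ℝ Y] [CompleteSpace Y]
    [FiniteDimensional ℝ Y]
    {ζ : Type*} [MetricSpace ζ] [CompleteSpace ζ]
    (A : Set Y) (hA_ne : A.Nonempty) (hA_bdd : Bornology.IsBounded A)
    (hA_cl : IsClosed A) (hA_cv : Convex ℝ A)
    (C : Y → ζ)
    (hC_cont : ContinuousOn C A)
    (hC_cpt : IsCompact (closure (C '' A)))
    (T : Y → ζ → Y)
    (hT_kannan : ∃ k : ℝ, 0 ≤ k ∧ k < 1 / 2 ∧
      ∀ u₁ ∈ A, ∀ u₂ ∈ A, ∀ v ∈ C '' A,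
        ‖T u₁ v - T u₂ v‖ ≤ k * (‖T u₁ v - u₁‖ + ‖T u₂ v - u₂‖))
    (hη_maps : ∀ u ∈ A, T u (C u) ∈ A)
    (hη_cont : ContinuousOn (fun u => T u (C u)) A) :
    ∃ u ∈ A, T u (C u) = u := by
  exact kn_brouwer A hA_ne hA_bdd hA_cl hA_cv (fun u => T u (C u)) hη_maps hη_cont
end
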